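/- Let M be a finitely generated torsion module over R[t^{±1}] (R a Noetherian UFD) and let N ⊆ M be a submodule. Then the order of N divides the order of M. -/

import Mathlib

/-- `Δ` is the order (gcd of the maximal minors of a presentation matrix) of the
finitely generated module `M` over the commutative ring `A`. -/
def IsOrderOf {A : Type*} [CommRing A] (Δ : A)
    (M : Type*) [AddCommGroup M] [Module A M] : Prop :=
  ∃ (m n : ℕ) (F : Matrix (Fin n) (Fin m) A),
    Nonempty (((Fin n → A) ⧸ LinearMap.range (Matrix.toLin' F)) ≃ₗ[A] M) ∧
    (∀ e : Fin n ↪ Fin m, Δ ∣ (F.submatrix id ⇑e).det) ∧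
    (∀ d : A, (∀ e : Fin n ↪ Fin m, d ∣ (F.submatrix id ⇑e).det) → d ∣ Δ)

theorem ord_aux_unique {A : Type*} [CommRing A] [IsDomain A] [IsDiscreteValuationRing A] {n : ℕ}
    (G : Matrix (Fin n) (Fin n) A) (hG : G.det ≠ 0) :
    Module.length A ((Fin n → A) ⧸ LinearMap.range (Matrix.toLin' G)) =
      IsDiscreteValuationRing.addVal A G.det := by
  classical
  have hinj : Function.Injective (Matrix.toLin' G) := by
    intro x y h
    simp only [Matrix.toLin'_apply] at h
    have h2 : G.mulVec (x - y) = 0 := by rw [Matrix.mulVec_sub, h, sub_self]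
    have := Matrix.eq_zero_of_mulVec_eq_zero hG h2
    exact sub_eq_zero.1 this
  let L := LinearMap.range (Matrix.toLin' G)
  let e : (Fin n → A) ≃ₗ[A] L := LinearEquiv.ofInjective _ hinj
  have hr : Module.finrank A L = Module.finrank A (Fin n → A) := e.finrank_eq.symm
  let b := Pi.basisFun A (Fin n)
  let a := Submodule.smithNormalFormCoeffs b hr
  let b' := Submodule.smithNormalFormTopBasis b hr
  let ab := Submodule.smithNormalFormBotBasis b hr
  have hab : ∀ i, (ab i : Fin n → A) = a i • b' i := Submodule.smithNormalFormBotBasis_def b hr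
  let E : (Fin n → A) ≃ₗ[A] (Fin n → A) := e.trans (ab.equiv b' (Equiv.refl _))
  let D : (Fin n → A) →ₗ[A] (Fin n → A) := Matrix.toLin b' b' (Matrix.diagonal a)
  have hD : ∀ i, D (b' i) = a i • b' i := by
    intro i
    simp [D, Matrix.toLin_self, Matrix.diagonal_apply]
  have hDE : D ∘ₗ (E : (Fin n → A) →ₗ[A] (Fin n → A)) = Matrix.toLin' G := by
    have h1 : D ∘ₗ ((ab.equiv b' (Equiv.refl _) : L ≃ₗ[A] _) : L →ₗ[A] (Fin n → A))
        = L.subtype := by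
      apply ab.ext
      intro i
      simp [hD, hab]
    ext1 i
    ext1
    have := LinearMap.congr_fun h1 (e (Pi.single i 1))
    have h2 : ((e (Pi.single i 1) : L) : Fin n → A) = Matrix.toLin' G (Pi.single i 1) := rfl
    simp only [LinearMap.comp_apply, Submodule.subtype_apply, h2] at this
    exact this
  have hdet : G.det = (∏ i, a i) * LinearMap.det (E : (Fin n → A) →ₗ[A] (Fin n → A)) := by
    rw [← LinearMap.det_toLin', ← hDE, LinearMap.det_comp]
    simp [D]
  have hu : IsUnit (LinearMap.det (E : (Fin n → A) →ₗ[A] (Fin n → A))) :=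
    LinearEquiv.isUnit_det' E
  rw [(Submodule.quotientEquivPiSpan L b hr).length_eq, Module.length_pi_of_fintype, hdet,
    IsDiscreteValuationRing.addVal_mul, IsDiscreteValuationRing.addVal_eq_zero_iff.2 hu, add_zero]
  have : IsDiscreteValuationRing.addVal A (∏ i, a i)
      = ∑ i, IsDiscreteValuationRing.addVal A (a i) := by
    induction (Finset.univ : Finset (Fin n)) using Finset.induction_on with
    | empty => simp
    | insert x s hx ih => rw [Finset.prod_insert hx, Finset.sum_insert hx, 
        IsDiscreteValuationRing.addVal_mul, ih]
  rw [this]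
  refine Finset.sum_congr rfl fun i _ => ?_
  exact Ring.ord_eq_addVal (a i)

theorem ord_aux_le {A : Type*} [CommRing A] [IsDomain A] [IsDiscreteValuationRing A] {n m : ℕ}
    (F : Matrix (Fin n) (Fin m) A) (e : Fin n → Fin m) :
    Module.length A ((Fin n → A) ⧸ LinearMap.range (Matrix.toLin' F)) ≤
      IsDiscreteValuationRing.addVal A (F.submatrix id e).det := by
  by_cases h0 : (F.submatrix id e).det = 0
  · simp [h0]
  rw [← ord_aux_unique _ h0]
  have hle : LinearMap.range (Matrix.toLin' (F.submatrix id e)) ≤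
      LinearMap.range (Matrix.toLin' F) := by
    rw [Matrix.range_toLin', Matrix.range_toLin']
    apply Submodule.span_mono
    rintro _ ⟨i, rfl⟩
    exact ⟨e i, rfl⟩
  exact Module.length_le_of_surjective (Submodule.factor hle) (Submodule.factor_surjective hle)

theorem ord_aux_mul {A : Type*} [CommRing A] {n m : ℕ}
    (F : Matrix (Fin n) (Fin m) A) (d : A)
    (hF : ∀ e : Fin n ↪ Fin m, d ∣ (F.submatrix id ⇑e).det) (C : Matrix (Fin m) (Fin n) A) :
    d ∣ (F * C).det := by
  classical
  have h : (F * C).det = ∑ f : Fin n → Fin m, (∏ i, C (f i) i) * (F.submatrix id f).det := by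
    have : (F * C).transpose = Matrix.of fun i => ∑ j, C j i • F.transpose j := by
      ext i j
      simp [Matrix.mul_apply, mul_comm]
    rw [← Matrix.det_transpose, this]
    change Matrix.detRowAlternating.toMultilinearMap (fun i => ∑ j, C j i • F.transpose j) = _
    rw [MultilinearMap.map_sum]
    refine Finset.sum_congr rfl fun f _ => ?_
    rw [MultilinearMap.map_smul_univ, smul_eq_mul, ← Matrix.det_transpose]
    rfl
  rw [h]
  refine Finset.dvd_sum fun f _ => Dvd.dvd.mul_left ?_ _
  by_cases hf : Function.Injective f
  · exact hF ⟨f, hf⟩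
  · simp only [Function.Injective, not_forall] at hf
    obtain ⟨i, j, hij, hne⟩ := hf
    rw [Matrix.det_zero_of_column_eq hne (by intro k; simp [hij])]
    exact dvd_zero _

theorem ord_aux_ge {A : Type*} [CommRing A] [IsDomain A] [IsDiscreteValuationRing A] {n m : ℕ}
    (F : Matrix (Fin n) (Fin m) A) (d : A) (hd : d ≠ 0)
    (hF : ∀ e : Fin n ↪ Fin m, d ∣ (F.submatrix id ⇑e).det) :
    IsDiscreteValuationRing.addVal A d ≤
      Module.length A ((Fin n → A) ⧸ LinearMap.range (Matrix.toLin' F)) := by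
  classical
  let L : Submodule A (Fin n → A) := LinearMap.range (Matrix.toLin' F) ⊔
    LinearMap.range (d • (LinearMap.id : (Fin n → A) →ₗ[A] (Fin n → A)))
  have hle : LinearMap.range (Matrix.toLin' F) ≤ L := le_sup_left
  refine le_trans ?_
    (Module.length_le_of_surjective (Submodule.factor hle) (Submodule.factor_surjective hle))
  have hr : Module.finrank A L = n := by
    apply le_antisymm
    · simpa using Submodule.finrank_le L
    · have hm : ∀ v : Fin n → A, (d • (LinearMap.id : (Fin n → A) →ₗ[A] (Fin n → A))) v ∈ L :=
        fun v => (le_sup_right : _ ≤ L) ⟨v, rfl⟩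
      have := LinearMap.finrank_le_finrank_of_injective
        (f := LinearMap.codRestrict L (d • (LinearMap.id : (Fin n → A) →ₗ[A] (Fin n → A))) hm)
        (by
          intro x y hxy
          have := congrArg Subtype.val hxy
          simpa [hd] using this)
      simpa using this
  let b : Module.Basis (Fin n) A L := Module.finBasisOfFinrankEq A L hr
  let G : Matrix (Fin n) (Fin n) A := Matrix.of fun i j => (b j : Fin n → A) i
  have hGL : LinearMap.range (Matrix.toLin' G) = L := by
    rw [Matrix.range_toLin']
    have h1 : Submodule.span A (Set.range b) = ⊤ := b.span_eq
    have h2 := congrArg (Submodule.map L.subtype) h1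
    rw [Submodule.map_span, Submodule.map_top, Submodule.range_subtype, ← Set.range_comp] at h2
    exact h2
  have hG0 : G.det ≠ 0 := by
    have hli : LinearIndependent A (fun j => (b j : Fin n → A)) :=
      b.linearIndependent.map' L.subtype (Submodule.ker_subtype L)
    intro h0
    obtain ⟨v, hv, hv0⟩ := Matrix.exists_mulVec_eq_zero_iff.2 h0
    apply hv
    funext i
    refine Fintype.linearIndependent_iff.1 hli v ?_ i
    rw [← hv0]
    ext k
    simp [G, Matrix.mulVec, dotProduct, mul_comm]
  rw [← hGL, ord_aux_unique G hG0, IsDiscreteValuationRing.addVal_le_iff_dvd]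
  have hcol : ∀ j, ∃ (c : Fin m → A) (w : Fin n → A), F.mulVec c + d • w = b j := by
    intro j
    obtain ⟨_, ⟨c, rfl⟩, _, ⟨w, rfl⟩, h⟩ := Submodule.mem_sup.1 (b j).2
    exact ⟨c, w, by simpa using h⟩
  choose c w hcw using hcol
  have hGe : G = F * (Matrix.of fun i j => c j i) + d • (Matrix.of fun i j => w j i) := by
    ext i j
    have := congrFun (hcw j) i
    simp only [G, Matrix.of_apply, ← this]
    simp [Matrix.mul_apply, Matrix.mulVec, dotProduct]
  have hFC := ord_aux_mul F d hF (Matrix.of fun i j => c j i)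
  rw [← Ideal.mem_span_singleton, ← Ideal.Quotient.eq_zero_iff_mem, RingHom.map_det] at hFC ⊢
  rw [hGe, ← hFC]
  congr 1
  ext i j
  have : (Ideal.Quotient.mk (Ideal.span {d})) d = 0 :=
    Ideal.Quotient.eq_zero_iff_mem.2 (Ideal.mem_span_singleton_self d)
  simp [RingHom.mapMatrix_apply, this]

theorem ord_aux_loc {A : Type*} [CommRing A] [IsDomain A] [IsNoetherianRing A] {p : A}
    (hp : Prime p) {n m n' m' : ℕ} (F : Matrix (Fin n) (Fin m) A) (F' : Matrix (Fin n') (Fin m') A)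
    (φ : ((Fin n' → A) ⧸ LinearMap.range (Matrix.toLin' F')) →ₗ[A]
      ((Fin n → A) ⧸ LinearMap.range (Matrix.toLin' F))) (hφ : Function.Injective φ) (k : ℕ)
    (hF' : ∀ e : Fin n' ↪ Fin m', p ^ k ∣ (F'.submatrix id ⇑e).det) (e : Fin n ↪ Fin m) :
    p ^ k ∣ (F.submatrix id ⇑e).det := by
  classical
  have hP : (Ideal.span {p}).IsPrime := (Ideal.span_singleton_prime hp.ne_zero).2 hp
  let S := (Ideal.span {p}).primeCompl
  let O := Localization.AtPrime (Ideal.span {p})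
  have hinj : Function.Injective (algebraMap A O) :=
    IsLocalization.injective O (Ideal.primeCompl_le_nonZeroDivisors (Ideal.span {p}))
  have : IsNoetherianRing O := IsLocalization.isNoetherianRing S O inferInstance
  have : IsDomain O := inferInstance
  have hmax : IsLocalRing.maximalIdeal O = Ideal.span {algebraMap A O p} := by
    rw [← Localization.AtPrime.map_eq_maximalIdeal, Ideal.map_span, Set.image_singleton]
  have hp0 : algebraMap A O p ≠ 0 := by
    rw [Ne, map_eq_zero_iff _ hinj]
    exact hp.ne_zero
  have hnf : ¬ IsField O := by
    rw [IsLocalRing.isField_iff_maximalIdeal_eq, hmax, Ideal.span_singleton_eq_bot]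
    exact hp0
  have hprin : (IsLocalRing.maximalIdeal O).IsPrincipal := ⟨_, hmax⟩
  have : IsDiscreteValuationRing O :=
    ((IsDiscreteValuationRing.TFAE O hnf).out 0 4).2 hprin
  let ι : ∀ a : ℕ, (Fin a → A) →ₗ[A] (Fin a → O) := fun a =>
    LinearMap.pi fun i => Algebra.linearMap A O ∘ₗ LinearMap.proj i
  have hι : ∀ a, IsLocalizedModule S (ι a) := fun a =>
    IsLocalizedModule.pi S (fun _ => Algebra.linearMap A O)
  have key : ∀ {a b : ℕ} (H : Matrix (Fin a) (Fin b) A),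
      (LinearMap.range (Matrix.toLin' H)).localized' O S (ι a) =
      LinearMap.range (Matrix.toLin' (H.map (algebraMap A O))) := by
    intro a b H
    rw [Matrix.range_toLin', Matrix.range_toLin', Submodule.localized'_span, ← Set.range_comp]
    rfl
  have hle := Module.length_le_of_injective
    (IsLocalizedModule.mapExtendScalars S
      ((LinearMap.range (Matrix.toLin' F')).toLocalizedQuotient' O S (ι n'))
      ((LinearMap.range (Matrix.toLin' F)).toLocalizedQuotient' O S (ι n)) O φ)
    (IsLocalizedModule.map_injective S _ _ φ hφ)
  rw [key, key] at hle
  have hdet : ∀ {a b : ℕ} (H : Matrix (Fin a) (Fin b) A) (f : Fin a → Fin b),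
      ((H.map (algebraMap A O)).submatrix id f).det = algebraMap A O (H.submatrix id f).det := by
    intro a b H f
    rw [RingHom.map_det]
    rfl
  have h1 := ord_aux_ge (F'.map (algebraMap A O)) (algebraMap A O p ^ k) (pow_ne_zero _ hp0) (by
    intro f
    rw [hdet, ← map_pow]
    exact map_dvd _ (hF' f))
  have h2 := (h1.trans hle).trans (ord_aux_le (F.map (algebraMap A O)) e)
  rw [IsDiscreteValuationRing.addVal_le_iff_dvd, hdet, ← map_pow] at h2
  obtain ⟨y, hy⟩ := h2
  obtain ⟨⟨z, s⟩, hz⟩ := IsLocalization.surj S y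
  have h3 : (F.submatrix id ⇑e).det * s = p ^ k * z := by
    apply hinj
    simp only at hz
    rw [map_mul, map_mul, hy, mul_assoc, hz]
  have hs : ¬ p ∣ (s : A) := fun h => s.2 (Ideal.mem_span_singleton.2 h)
  exact hp.pow_dvd_of_dvd_mul_right k hs ⟨z, h3⟩

theorem ord_aux_ufd {A : Type*} [CommRing A] [IsDomain A] [UniqueFactorizationMonoid A] 
    (hA : ¬ IsField A) (a b : A) (h : ∀ p : A, Prime p → ∀ k : ℕ, p ^ k ∣ a → p ^ k ∣ b) :
    a ∣ b := by
  by_cases hb : b = 0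
  · simp [hb]
  have ha : a ≠ 0 := by
    rintro rfl
    obtain ⟨x, hx0, hx⟩ := Ring.exists_not_isUnit_of_not_isField hA
    obtain ⟨p, hp, -⟩ := WfDvdMonoid.exists_irreducible_factor hx hx0
    have hfin := FiniteMultiplicity.of_prime_left hp.prime hb
    obtain ⟨k, hk⟩ := hfin
    exact hk (h p hp.prime _ (dvd_zero _))
  rw [UniqueFactorizationMonoid.dvd_iff_emultiplicity_le ha]
  intro p hp
  apply emultiplicity_le_emultiplicity_iff.2
  exact h p hp

theorem ord_aux_notfield (R : Type*) [CommRing R] [IsDomain R] :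
    ¬ IsField (LaurentPolynomial R) := by
  intro h
  have hne : Polynomial.toLaurent (Polynomial.X - Polynomial.C (1 : R)) ≠ 0 := by
    rw [Ne, map_eq_zero_iff _ Polynomial.toLaurent_injective]
    exact Polynomial.X_sub_C_ne_zero 1
  obtain ⟨b, hb⟩ := h.mul_inv_cancel hne
  have := congrArg (LaurentPolynomial.eval₂ (RingHom.id R) (1 : Rˣ)) hb
  rw [map_mul, LaurentPolynomial.eval₂_toLaurent] at this
  simp at this

/-- If `N` is a submodule of a finitely generated torsion module `M` over
`R[t^{±1}]`, `R` a Noetherian UFD, then the order of `N` divides the order of `M`. -/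
theorem stmt_12 {R : Type*} [CommRing R] [IsDomain R] [IsNoetherianRing R]
    [UniqueFactorizationMonoid R]
    (M : Type*) [AddCommGroup M] [Module (LaurentPolynomial R) M]
    [Module.Finite (LaurentPolynomial R) M]
    (htor : Module.IsTorsion (LaurentPolynomial R) M)
    (N : Submodule (LaurentPolynomial R) M)
    (ΔN ΔM : LaurentPolynomial R)
    (hN : IsOrderOf ΔN N) (hM : IsOrderOf ΔM M) :
    ΔN ∣ ΔM := by
  obtain ⟨m', n', F', ⟨e'⟩, hd', -⟩ := hN
  obtain ⟨m, n, F, ⟨e⟩, -, hg⟩ := hM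
  have : IsDomain (LaurentPolynomial R) := inferInstance
  have : IsNoetherianRing (LaurentPolynomial R) :=
    IsLocalization.isNoetherianRing (Submonoid.powers (Polynomial.X : Polynomial R)) _ inferInstance
  have : UniqueFactorizationMonoid (LaurentPolynomial R) :=
    UniqueFactorizationMonoid.of_isLocalization (Submonoid.powers (Polynomial.X : Polynomial R)) _
  refine ord_aux_ufd (ord_aux_notfield R) _ _ fun p hp k hk => hg _ fun f => ?_
  refine ord_aux_loc hp F F' (e.symm.toLinearMap ∘ₗ N.subtype ∘ₗ e'.toLinearMap) ?_ k
    (fun f' => hk.trans (hd' f')) f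
  exact e.symm.injective.comp (N.injective_subtype.comp e'.injective)
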